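/- arXiv:2205.00474 — 3 statements merged into one kernel-verified Lean document; each statement's English description precedes it below -/
import Mathlib

section
/- Let M = (M_{ij}) be an n×m binary matrix and define the profile P_M as follows: the voters are [n]; the candidates are c_j^1, c_j^2 for j ∈ [m]; every voter ranks every candidate with column index j_1 above every candidate with column index j_2 whenever j_1 < j_2; and voter i ranks c_j^1 above c_j^2 if M_{ij} = 1, and c_j^2 above c_j^1 if M_{ij} = 0. Then for any permutation σ of [n] and any k ≥ 0: M is k-C1P_SW with respect to σ if and only if P_M is k-crossing with respect to σ. Consequently, M is k-C1P_SW (for some permutation) if and only if P_M is k-crossing (for some permutation). -/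
/-!
The order of two candidates from different columns is the same for every voter, so it never
switches (`numSwitches_const`). The only pairs left are `(j,0), (j,1)` in one of the two orders:
the preference for `(j,0)` over `(j,1)` is column `j` of `M`, and the reverse preference is its
complement, which has the same switches (`numSwitches_not`). Hence the largest number of switches
over all pairs of candidates is the largest number of switches over all columns.
-/

open scoped Classical

/-- Number of adjacent "switches" of a predicate along `Fin n`. -/
noncomputable def numSwitches {n : ℕ} (g : Fin n → Prop) : ℕ :=
  (Finset.univ.filter fun i : Fin n =>
    ∃ h : i.val + 1 < n, ¬ (g i ↔ g ⟨i.val + 1, h⟩)).card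

/-- `P` is `k`-crossing with respect to the permutation `σ` of the voters. -/
def kCrossingWrt {n : ℕ} {C : Type*} (k : ℕ)
    (P : Fin n → C → C → Prop) (σ : Equiv.Perm (Fin n)) : Prop :=
  ∀ c c' : C, c ≠ c' → numSwitches (fun i => P (σ i) c c') ≤ k

def IsInterval {n : ℕ} (S : Set (Fin n)) : Prop :=
  S = ∅ ∨ ∃ l r : Fin n, l ≤ r ∧ S = {i | l ≤ i ∧ i ≤ r}

def IsCircularInterval {n : ℕ} (S : Set (Fin n)) : Prop :=
  S = ∅ ∨ (∃ l r : Fin n, l ≤ r ∧ S = {i | l ≤ i ∧ i ≤ r}) ∨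
    (∃ l r : Fin n, l < r ∧ S = {i | i ≤ l ∨ r ≤ i})

/-- `P` is single-interval on the circle induced by `σ`. -/
def SIcircWrt {n : ℕ} {C : Type*} (P : Fin n → C → C → Prop)
    (σ : Equiv.Perm (Fin n)) : Prop :=
  ∀ c c' : C, c ≠ c' → IsCircularInterval {i : Fin n | P (σ i) c c'}

def IsKIntervalUnion {n : ℕ} (k : ℕ) (S : Set (Fin n)) : Prop :=
  ∃ f : Fin k → Set (Fin n), (∀ t, IsInterval (f t)) ∧ S = ⋃ t, f t

def IsKCircularIntervalUnion {n : ℕ} (k : ℕ) (S : Set (Fin n)) : Prop :=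
  ∃ f : Fin k → Set (Fin n), (∀ t, IsCircularInterval (f t)) ∧ S = ⋃ t, f t

/-- `P` is `k`-interval on the circle induced by `σ`. -/
def kIntervalOnCircleWrt {n : ℕ} {C : Type*} (k : ℕ)
    (P : Fin n → C → C → Prop) (σ : Equiv.Perm (Fin n)) : Prop :=
  ∀ c c' : C, c ≠ c' → IsKCircularIntervalUnion k {i : Fin n | P (σ i) c c'}

/-- Consecutive ones property of a binary matrix w.r.t. a row permutation. -/
def C1PWrt {n : ℕ} {J : Type*} (M : Fin n → J → Bool) (σ : Equiv.Perm (Fin n)) : Prop :=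
  ∀ j : J, IsInterval {i : Fin n | M (σ i) j = true}

/-- Circular consecutive ones property w.r.t. a row permutation. -/
def C1PcircWrt {n : ℕ} {J : Type*} (M : Fin n → J → Bool) (σ : Equiv.Perm (Fin n)) : Prop :=
  ∀ j : J, IsCircularInterval {i : Fin n | M (σ i) j = true}

def kC1PWrt {n : ℕ} {J : Type*} (k : ℕ) (M : Fin n → J → Bool) (σ : Equiv.Perm (Fin n)) : Prop :=
  ∀ j : J, IsKIntervalUnion k {i : Fin n | M (σ i) j = true}

def kC1PcircWrt {n : ℕ} {J : Type*} (k : ℕ) (M : Fin n → J → Bool) (σ : Equiv.Perm (Fin n)) : Prop :=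
  ∀ j : J, IsKCircularIntervalUnion k {i : Fin n | M (σ i) j = true}

/-- At most `k` switches per column w.r.t. a row permutation. -/
def kC1PSWWrt {n : ℕ} {J : Type*} (k : ℕ) (M : Fin n → J → Bool) (σ : Equiv.Perm (Fin n)) : Prop :=
  ∀ j : J, numSwitches (fun i => M (σ i) j = true) ≤ k

/-- Majority margin of `c` over `c'` in profile `P`. -/
noncomputable def majorityMargin {n : ℕ} {C : Type*} (P : Fin n → C → C → Prop) (c c' : C) : ℤ :=
  ((Finset.univ.filter fun v : Fin n => P v c c').card : ℤ) -
    ((Finset.univ.filter fun v : Fin n => P v c' c).card : ℤ)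

def Illegal {n : ℕ} {C : Type*} (w : Fin n → C) : Prop :=
  ∃ (a b : C) (i₁ i₂ i₃ i₄ : Fin n), a ≠ b ∧ i₁ < i₂ ∧ i₂ < i₃ ∧ i₃ < i₄ ∧
    w i₁ = a ∧ w i₂ = b ∧ w i₃ = a ∧ w i₄ = b

def Legal {n : ℕ} {C : Type*} (w : Fin n → C) : Prop := ¬ Illegal w

/-- Some occurrence of `a` lies strictly between two occurrences of `b`
(equivalently, strictly between the first and the last occurrence of `b`). -/
def OccBetween {n : ℕ} {C : Type*} (w : Fin n → C) (a b : C) : Prop :=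
  ∃ j i i' : Fin n, w j = a ∧ w i = b ∧ w i' = b ∧ i < j ∧ j < i'

/-- The profile `P_M` built from a binary matrix `M`: candidates are `(j, ℓ)` for a column
`j` and `ℓ ∈ {0, 1}` (representing `c_j^1` and `c_j^2`); candidates of smaller column index
are always ranked higher, and within column `j` voter `v` ranks `c_j^1 = (j,0)` above
`c_j^2 = (j,1)` iff `M v j = 1`. -/
def profileOfMatrix {n m : ℕ} (M : Fin n → Fin m → Bool) :
    Fin n → (Fin m × Fin 2) → (Fin m × Fin 2) → Prop :=
  fun v a b => a.1 < b.1 ∨ (a.1 = b.1 ∧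
    ((M v a.1 = true ∧ a.2 = 0 ∧ b.2 = 1) ∨ (M v a.1 = false ∧ a.2 = 1 ∧ b.2 = 0)))

theorem numSwitches_const {n : ℕ} (p : Prop) : numSwitches (fun _ : Fin n => p) = 0 := by
  simp [numSwitches]

theorem numSwitches_not {n : ℕ} (g : Fin n → Prop) :
    numSwitches (fun i => ¬ g i) = numSwitches g := by
  simp only [numSwitches, not_iff_not]

theorem profileOfMatrix_zero_one {n m : ℕ} (M : Fin n → Fin m → Bool) (v : Fin n) (j : Fin m) :
    profileOfMatrix M v (j, 0) (j, 1) ↔ M v j = true := by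
  simp [profileOfMatrix]

theorem profileOfMatrix_one_zero {n m : ℕ} (M : Fin n → Fin m → Bool) (v : Fin n) (j : Fin m) :
    profileOfMatrix M v (j, 1) (j, 0) ↔ ¬ M v j = true := by
  simp [profileOfMatrix]

theorem profileOfMatrix_of_ne {n m : ℕ} (M : Fin n → Fin m → Bool) (v : Fin n)
    {a b : Fin m × Fin 2} (h : a.1 ≠ b.1) : profileOfMatrix M v a b ↔ a.1 < b.1 := by
  simp [profileOfMatrix, h]

theorem kC1PSWWrt_iff_kCrossingWrt {n m : ℕ} (M : Fin n → Fin m → Bool) (k : ℕ)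
    (σ : Equiv.Perm (Fin n)) :
    kC1PSWWrt k M σ ↔ kCrossingWrt k (profileOfMatrix M) σ := by
  constructor
  · rintro h ⟨j, a⟩ ⟨j', b⟩ hne
    by_cases hj : j = j'
    · subst hj
      have hab : (a = 0 ∧ b = 1) ∨ (a = 1 ∧ b = 0) := by
        have : a ≠ b := fun e => hne (by rw [e])
        omega
      rcases hab with ⟨rfl, rfl⟩ | ⟨rfl, rfl⟩
      · simpa only [profileOfMatrix_zero_one] using h j
      · simp only [profileOfMatrix_one_zero]
        exact (numSwitches_not _).trans_le (h j)
    · simp only [profileOfMatrix_of_ne M _ (a := (j, a)) (b := (j', b)) hj, numSwitches_const]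
      exact Nat.zero_le k
  · intro h j
    simpa only [profileOfMatrix_zero_one] using h (j, 0) (j, 1) (by simp)

/-- For any permutation `σ` and any `k ≥ 0`: `M` is `k`-C1P_SW w.r.t. `σ`
iff `P_M` is `k`-crossing w.r.t. `σ`; consequently `M` is `k`-C1P_SW (for some
permutation) iff `P_M` is `k`-crossing (for some permutation). -/
theorem kC1PSW_iff_kCrossing_profileOfMatrix {n m : ℕ} (M : Fin n → Fin m → Bool) (k : ℕ) :
    (∀ σ : Equiv.Perm (Fin n), kC1PSWWrt k M σ ↔ kCrossingWrt k (profileOfMatrix M) σ) ∧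
    ((∃ σ : Equiv.Perm (Fin n), kC1PSWWrt k M σ) ↔
      (∃ σ : Equiv.Perm (Fin n), kCrossingWrt k (profileOfMatrix M) σ)) := by
  exact ⟨kC1PSWWrt_iff_kCrossingWrt M k, exists_congr (kC1PSWWrt_iff_kCrossingWrt M k)⟩
end

section
/- (Debord–McGarvey for two-crossing elections) Let m ≥ 2 and let w : {(c,c') ∈ [m]² : c ≠ c'} → ℤ be skew-symmetric (w(c,c') = −w(c',c)) with all values |w(c,c')| of the same parity, and let W = max_{c≠c'} |w(c,c')|. Then there exists a two-crossing preference profile over the m candidates, with at most m(m−1)(W+3) voters, whose majority margins satisfy m_{c,c'} = w(c,c') for all pairs of distinct candidates (c,c'). -/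
/-!
Fix the indexing `(a, b) ↦ a * m + b` of the pairs `a < b` of candidates; the indices are smaller
than `M = m * (m - 1)`. For every time `k`, reversing the identity order exactly on the pairs of
index `< k` again gives a linear order (`lexKey`, `lexKey_lt_iff`). Running through the times
`0, …, M - 1` and then through the reversals of the same orders (`cycleKey`) gives a sequence of
`2 * M` orders in which the pair of index `s` changes only at the times `s` and `M + s`
(`cycleKey_lt_iff`). Hence any profile that lists these orders with multiplicities, in this
sequence, is two-crossing (`numSwitches_le_two`).

The multiplicities realize the margins: an order and its reversal cancel, so one may give the order
at time `k` an integer multiplicity `y k`, a negative value standing for copies of the reversal.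
The pair of index `s` then has margin `∑_{k ≤ s} y k - ∑_{s < k < M} y k`. If `f s` is the target
margin, `y k = (f k - f (k - 1)) / 2` with the convention `f (-1) = -f (M - 1)` telescopes to `f s`
(`sum_telescope`); the halves are integers by the parity hypothesis. Since `|y k| ≤ W`, there are at
most `M * W` voters.
-/

open scoped Classical

lemma index_lt {m a b : ℕ} (hab : a < b) (hb : b < m) : a * m + b < m * (m - 1) := by
  have h1 : (a + 1) * m ≤ (m - 1) * m := Nat.mul_le_mul_right m (by omega)
  have h2 : (a + 1) * m = a * m + m := by ring
  rw [mul_comm m]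
  omega

/-- There is a nondecreasing sequence that takes each value `t < N` exactly `x t` times. -/
lemma exists_sequence (x : ℕ → ℕ) (N : ℕ) :
    ∃ (n : ℕ) (τ : Fin n → ℕ), n = ∑ t ∈ Finset.range N, x t ∧ (∀ v, τ v < N) ∧ Monotone τ ∧
      ∀ h : ℕ → ℤ, ∑ v, h (τ v) = ∑ t ∈ Finset.range N, (x t : ℤ) * h t := by
  induction N with
  | zero => exact ⟨0, fun _ => 0, by simp, fun v => v.elim0, fun v => v.elim0, by simp⟩
  | succ N ih =>
    obtain ⟨n, τ, hn, hlt, hmono, hsum⟩ := ih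
    refine ⟨n + x N, Fin.append τ (fun _ => N), by rw [Finset.sum_range_succ, hn], ?_, ?_, ?_⟩
    · intro v
      induction v using Fin.addCases with
      | left i => simpa using (hlt i).trans (Nat.lt_succ_self N)
      | right i => simp
    · intro u v huv
      induction u using Fin.addCases with
      | left i =>
        induction v using Fin.addCases with
        | left j => simpa using hmono (show i ≤ j from huv)
        | right j => simpa using (hlt i).le
      | right i =>
        induction v using Fin.addCases with
        | left j =>
          have h1 : n + i.val ≤ j.val := huv
          have h2 := j.isLt
          omega
        | right j => simp
    · intro h
      rw [Fin.sum_univ_add, Finset.sum_range_succ, ← hsum]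
      simp

/-- A nondecreasing sequence passes a given threshold at most once. -/
lemma card_passing_le_one {n : ℕ} (τ : Fin n → ℕ) (hτ : Monotone τ) (s : ℕ) :
    (Finset.univ.filter fun i : Fin n =>
      ∃ h : i.val + 1 < n, τ i ≤ s ∧ s < τ ⟨i.val + 1, h⟩).card ≤ 1 := by
  rw [Finset.card_le_one]
  have key : ∀ i j : Fin n, (∃ h : i.val + 1 < n, τ i ≤ s ∧ s < τ ⟨i.val + 1, h⟩) →
      τ j ≤ s → j ≤ i := by
    rintro i j ⟨h, -, h2⟩ hj
    by_contra! hlt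
    have h3 : (⟨i.val + 1, h⟩ : Fin n) ≤ j := hlt
    have := hτ h3
    omega
  intro i hi j hj
  simp only [Finset.mem_filter, Finset.mem_univ, true_and] at hi hj
  exact le_antisymm (key j i hj hi.2.1) (key i j hi hj.2.1)

lemma numSwitches_le_two {n : ℕ} (τ : Fin n → ℕ) (hτ : Monotone τ) (s u : ℕ) (g : Fin n → Prop)
    (hg : (∀ i, g i ↔ (τ i ≤ s ∨ u < τ i)) ∨ (∀ i, g i ↔ ¬ (τ i ≤ s ∨ u < τ i))) :
    numSwitches g ≤ 2 := by
  have hsub : (Finset.univ.filter fun i : Fin n =>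
      ∃ h : i.val + 1 < n, ¬ (g i ↔ g ⟨i.val + 1, h⟩)) ⊆
      (Finset.univ.filter fun i : Fin n =>
        ∃ h : i.val + 1 < n, τ i ≤ s ∧ s < τ ⟨i.val + 1, h⟩) ∪
      (Finset.univ.filter fun i : Fin n =>
        ∃ h : i.val + 1 < n, τ i ≤ u ∧ u < τ ⟨i.val + 1, h⟩) := by
    intro i hi
    simp only [Finset.mem_union, Finset.mem_filter, Finset.mem_univ, true_and] at hi ⊢
    obtain ⟨h, hi⟩ := hi
    have hle : τ i ≤ τ ⟨i.val + 1, h⟩ := hτ (Fin.mk_le_mk.2 (Nat.le_succ _))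
    have : (τ i ≤ s ∧ s < τ ⟨i.val + 1, h⟩) ∨ (τ i ≤ u ∧ u < τ ⟨i.val + 1, h⟩) := by
      rcases hg with hg | hg <;> rw [hg, hg] at hi <;> omega
    exact this.imp (fun q => ⟨h, q⟩) (fun q => ⟨h, q⟩)
  calc numSwitches g ≤ _ := Finset.card_le_card hsub
    _ ≤ _ := Finset.card_union_le _ _
    _ ≤ 1 + 1 := Nat.add_le_add (card_passing_le_one τ hτ s) (card_passing_le_one τ hτ u)

/-- Position of candidate `a` in the order at time `k = i * m + j` (`j < m`): the candidates below
`i` have already been moved to the end, in reverse order, candidate `i` stands right in front of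
`j`, and the candidates above `i` are in their original order. -/
def lexKey (m k a : ℕ) : ℤ :=
  if a < k / m then 4 * m - a else if a = k / m then 2 * ((k % m : ℕ) : ℤ) - 1 else 2 * a

/-- The order at time `k` keeps the pair `a < b` exactly as long as `k` does not exceed the index
of the pair. -/
lemma lexKey_lt_iff {m a b : ℕ} (k : ℕ) (hab : a < b) (hb : b < m) :
    (lexKey m k a < lexKey m k b ↔ k ≤ a * m + b) ∧
      (lexKey m k b < lexKey m k a ↔ a * m + b < k) := by
  have hj : k % m < m := Nat.mod_lt _ (by omega)
  have hk : m * (k / m) + k % m = k := Nat.div_add_mod k m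
  unfold lexKey
  generalize k / m = i at *
  generalize k % m = j at *
  rcases lt_trichotomy a i with h | h | h
  · have h1 : m * (a + 1) ≤ m * i := Nat.mul_le_mul_left m h
    have h2 : m * (a + 1) = a * m + m := by ring
    rw [if_pos h]
    split_ifs <;> omega
  · subst h
    rw [mul_comm] at hk
    split_ifs <;> omega
  · have h1 : m * (i + 1) ≤ m * a := Nat.mul_le_mul_left m h
    have h2 : m * (i + 1) = m * i + m := by ring
    rw [mul_comm a m]
    split_ifs <;> omega

/-- Position of candidate `a` in the order at time `t < 2 * M` of the closed cycle: the orders at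
times `0, …, M - 1`, followed by their reversals. -/
def cycleKey (m M t a : ℕ) : ℤ :=
  if t < M then lexKey m t a else - lexKey m (t - M) a

lemma cycleKey_lt_iff {m M a b : ℕ} (t : ℕ) (hab : a < b) (hb : b < m) (hM : a * m + b < M) :
    (cycleKey m M t a < cycleKey m M t b ↔ (t ≤ a * m + b ∨ M + (a * m + b) < t)) ∧
      (cycleKey m M t b < cycleKey m M t a ↔ ¬ (t ≤ a * m + b ∨ M + (a * m + b) < t)) := by
  unfold cycleKey
  have h1 := lexKey_lt_iff t hab hb
  have h2 := lexKey_lt_iff (t - M) hab hb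
  split_ifs
  · rw [h1.1, h1.2]; omega
  · rw [neg_lt_neg_iff, neg_lt_neg_iff, h2.1, h2.2]; omega

lemma sum_telescope (g : ℕ → ℤ) (s K : ℕ) :
    ∑ t ∈ Finset.range K, (g (t + 1) - g t) * (if t ≤ s then 1 else -1) =
      if K ≤ s + 1 then g K - g 0 else 2 * g (s + 1) - g 0 - g K := by
  induction K with
  | zero => simp
  | succ K ih =>
    rw [Finset.sum_range_succ, ih]
    rcases lt_trichotomy K (s + 1) with h | h | h
    · rw [if_pos h.le, if_pos (by omega), if_pos (by omega)]; ring
    · subst h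
      rw [if_pos le_rfl, if_neg (by omega), if_neg (by omega)]; ring
    · rw [if_neg (by omega), if_neg (by omega), if_neg (by omega)]; ring

/-- Integer multiplicities `y` on `M` times, realized by natural multiplicities on `2 * M` times
with the weights of the second half negated. -/
lemma exists_signed_sequence (y : ℕ → ℤ) (M : ℕ) :
    ∃ (n : ℕ) (τ : Fin n → ℕ), n = ∑ t ∈ Finset.range M, (y t).natAbs ∧ Monotone τ ∧
      ∀ h : ℕ → ℤ, (∀ t < M, h (M + t) = - h t) →
        ∑ v, h (τ v) = ∑ t ∈ Finset.range M, y t * h t := by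
  obtain ⟨n, τ, hn, -, hmono, hsum⟩ := exists_sequence
    (fun t => if t < M then (y t).toNat else (- y (t - M)).toNat) (M + M)
  refine ⟨n, τ, ?_, hmono, fun h hh => ?_⟩
  · rw [hn, Finset.sum_range_add, ← Finset.sum_add_distrib]
    refine Finset.sum_congr rfl fun t ht => ?_
    rw [Finset.mem_range] at ht
    rw [if_pos ht, if_neg (by omega), Nat.add_sub_cancel_left]
    omega
  · rw [hsum, Finset.sum_range_add, ← Finset.sum_add_distrib]
    refine Finset.sum_congr rfl fun t ht => ?_
    rw [Finset.mem_range] at ht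
    rw [if_pos ht, if_neg (by omega), Nat.add_sub_cancel_left, hh t ht, mul_neg, ← sub_eq_add_neg,
      ← sub_mul]
    congr 1
    omega

/-- Debord–McGarvey for two-crossing elections: for `m ≥ 2` and any
skew-symmetric integer weight function `w` on pairs of the `m` candidates whose values on
distinct pairs all have the same parity, there is a two-crossing profile with at most
`m(m-1)(W+3)` voters (`W` the maximum absolute weight) whose majority margins realize `w`. -/
theorem debord_mcgarvey_twoCrossing (m : ℕ) (hm : 2 ≤ m)
    (w : Fin m → Fin m → ℤ)
    (hskew : ∀ c c', w c c' = - w c' c)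
    (hparity : ∀ c c' d d' : Fin m, c ≠ c' → d ≠ d' → w c c' % 2 = w d d' % 2) :
    ∃ (n : ℕ) (P : Fin n → Fin m → Fin m → Prop),
      (∀ v, IsStrictTotalOrder (Fin m) (P v)) ∧
      n ≤ m * (m - 1) *
        ((Finset.univ.sup fun p : Fin m × Fin m => (w p.1 p.2).natAbs) + 3) ∧
      (∃ σ : Equiv.Perm (Fin n), kCrossingWrt 2 P σ) ∧
      (∀ c c' : Fin m, c ≠ c' → majorityMargin P c c' = w c c') := by
  set W := Finset.univ.sup fun p : Fin m × Fin m => (w p.1 p.2).natAbs with hW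
  have hwW : ∀ c c', (w c c').natAbs ≤ W := fun c c' =>
    Finset.le_sup (f := fun p : Fin m × Fin m => (w p.1 p.2).natAbs) (Finset.mem_univ (c, c'))
  set M := m * (m - 1) with hM
  have hMpos : 0 < M := Nat.mul_pos (by omega) (by omega)
  -- Target margin at each index; indices that do not encode a pair get the value of the pair (0, 1).
  let f : ℕ → ℤ := fun k =>
    if h : k / m < k % m ∧ k % m < m then w ⟨k / m, h.1.trans h.2⟩ ⟨k % m, h.2⟩
    else w ⟨0, by omega⟩ ⟨1, by omega⟩
  have hfW : ∀ k, (f k).natAbs ≤ W := by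
    intro k
    simp only [f]
    split_ifs <;> exact hwW _ _
  have hfpar : ∀ k l, f k % 2 = f l % 2 := by
    intro k l
    simp only [f]
    split_ifs with h1 h2 h2 <;> apply hparity <;> simp only [ne_eq, Fin.mk.injEq] <;> omega
  have hfidx : ∀ c c' : Fin m, c < c' → f (c.val * m + c'.val) = w c c' := by
    intro c c' hcc
    have hd : (c.val * m + c'.val) / m = c.val := by
      rw [mul_comm, Nat.mul_add_div (by omega), Nat.div_eq_of_lt c'.isLt, add_zero]
    have hr : (c.val * m + c'.val) % m = c'.val := by
      rw [mul_comm, Nat.mul_add_mod, Nat.mod_eq_of_lt c'.isLt]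
    simp only [f, hd, hr]
    have hlt := And.intro (Fin.lt_def.1 hcc) c'.isLt
    simp only [dif_pos hlt]
  -- `g` is `f` shifted by one, with the antiperiodic initial value.
  let g : ℕ → ℤ := fun k => if k = 0 then - f (M - 1) else f (k - 1)
  have hg0 : g 0 = - f (M - 1) := rfl
  have hgs : ∀ k, g (k + 1) = f k := fun k => rfl
  have hgW : ∀ k, (g k).natAbs ≤ W := by
    intro k
    cases k with
    | zero => rw [hg0, Int.natAbs_neg]; exact hfW _
    | succ k => exact hfW k
  have hgpar : ∀ k, g k % 2 = f 0 % 2 := by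
    intro k
    cases k with
    | zero => rw [hg0]; have := hfpar (M - 1) 0; omega
    | succ k => exact hfpar k 0
  let y : ℕ → ℤ := fun k => (g (k + 1) - g k) / 2
  have hy : ∀ k, 2 * y k = g (k + 1) - g k := by
    intro k
    have h1 := hgpar k
    have h2 := hgpar (k + 1)
    simp only [y]
    omega
  have hyW : ∀ k, (y k).natAbs ≤ W := by
    intro k
    have h1 := hgW k
    have h2 := hgW (k + 1)
    have h3 := hy k
    omega
  obtain ⟨n, τ, hn, hmono, hsum⟩ := exists_signed_sequence y M
  have hiff := fun (c c' : Fin m) (h : c < c') (t : ℕ) =>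
    cycleKey_lt_iff (M := M) t h c'.isLt (index_lt h c'.isLt)
  refine ⟨n, fun v c c' => cycleKey m M (τ v) c < cycleKey m M (τ v) c', ?_, ?_,
    ⟨Equiv.refl _, ?_⟩, ?_⟩
  · intro v
    refine { trichotomous := ?_, irrefl := fun a => lt_irrefl _, trans := fun a b c => lt_trans }
    intro a b h1 h2
    by_contra hne
    rcases lt_or_gt_of_ne hne with h | h
    · have := hiff a b h (τ v); tauto
    · have := hiff b a h (τ v); tauto
  · calc n = ∑ t ∈ Finset.range M, (y t).natAbs := hn
      _ ≤ ∑ t ∈ Finset.range M, W := Finset.sum_le_sum fun t _ => hyW t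
      _ = M * W := by simp
      _ ≤ M * (W + 3) := Nat.mul_le_mul_left M (by omega)
  · intro c c' hne
    rcases lt_or_gt_of_ne hne with h | h
    · exact numSwitches_le_two τ hmono _ _ _ (Or.inl fun i => (hiff c c' h (τ i)).1)
    · exact numSwitches_le_two τ hmono _ _ _ (Or.inr fun i => (hiff c' c h (τ i)).2)
  · have main : ∀ c c' : Fin m, c < c' → majorityMargin
        (fun (v : Fin n) (c c' : Fin m) => cycleKey m M (τ v) c < cycleKey m M (τ v) c') c c'
          = w c c' := by
      intro c c' h
      have hidx : c.val * m + c'.val < M := index_lt h c'.isLt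
      have hf := hfidx c c' h
      have hi := hiff c c' h
      generalize c.val * m + c'.val = s at *
      have h1 := hsum (fun t => if t ≤ s ∨ M + s < t then 1 else -1) (by
        intro t ht
        by_cases hts : t ≤ s
        · rw [if_neg (by omega), if_pos (by omega)]
        · rw [if_pos (by omega), if_neg (by omega), neg_neg])
      have h2 : ∑ t ∈ Finset.range M, y t * (if t ≤ s ∨ M + s < t then (1 : ℤ) else -1) = f s := by
        have h3 : ∑ t ∈ Finset.range M, 2 * (y t * (if t ≤ s ∨ M + s < t then (1 : ℤ) else -1))
            = ∑ t ∈ Finset.range M, (g (t + 1) - g t) * (if t ≤ s then 1 else -1) := by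
          refine Finset.sum_congr rfl fun t ht => ?_
          rw [Finset.mem_range] at ht
          rw [← mul_assoc, hy]
          congr 1
          by_cases hts : t ≤ s
          · rw [if_pos (by omega), if_pos hts]
          · rw [if_neg (by omega), if_neg hts]
        have hgM : g M = f (M - 1) := if_neg hMpos.ne'
        rw [← Finset.mul_sum, sum_telescope, hg0, hgs, hgM] at h3
        split_ifs at h3 with hs
        · have : s = M - 1 := by omega
          rw [this] at h3 ⊢
          omega
        · omega
      rw [← hf, ← h2, ← h1]
      unfold majorityMargin
      simp only [hi]
      rw [Finset.card_filter, Finset.card_filter]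
      push_cast
      rw [← Finset.sum_sub_distrib]
      refine Finset.sum_congr rfl fun v _ => ?_
      by_cases hv : τ v ≤ s ∨ M + s < τ v
      · rw [if_pos hv, if_neg (not_not.2 hv), if_pos hv]; rfl
      · rw [if_neg hv, if_pos hv, if_neg hv]; rfl
    intro c c' hne
    rcases lt_or_gt_of_ne hne with h | h
    · exact main c c' h
    · rw [hskew, ← main c' c h]
      unfold majorityMargin
      ring
end

section
/- Let P be a profile over candidate set C with voters V = [n] that is two-crossing with respect to the identity permutation, let ρ : V × C → ℚ be a misrepresentation function consistent with P, and let k ≤ |C|. Then there exists a k-assignment w that is legal and optimal, i.e., w minimizes Φ_ρ(P,w) = Σ_{v∈V} ρ(v, w(v)) over all k-assignments. -/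
/-!
Start from any optimal `k`-assignment `w₀` and let every voter pick her favourite candidate
within the committee `w₀(V)` (`exists_best`). By consistency of `ρ` the total dissatisfaction does
not increase, so the new assignment `w` is still an optimal `k`-assignment. It is legal: a pattern
`a, b, a, b` at voters `i₁ < i₂ < i₃ < i₄` would mean that the preference between `a` and `b`
alternates along these four voters, hence switches at least three times
(`three_le_numSwitches`), contradicting the two-crossing property.
-/

open scoped Classical

/-- A discrete intermediate value statement: a predicate that differs at `i` and `j` switches at
some position in `[i, j)`. -/
lemma exists_switch {n : ℕ} (g : Fin n → Prop) (i j : Fin n) (hij : i < j)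
    (hg : ¬ (g i ↔ g j)) :
    ∃ s : Fin n, i ≤ s ∧ s < j ∧ ∃ h : s.val + 1 < n, ¬ (g s ↔ g ⟨s.val + 1, h⟩) := by
  by_contra hno
  push Not at hno
  have key : ∀ m : ℕ, ∀ h : i.val + m < n, i.val + m ≤ j.val → (g i ↔ g ⟨i.val + m, h⟩) := by
    intro m
    induction m with
    | zero => intro h _; rfl
    | succ m ih =>
      intro h hle
      exact (ih (by omega) (by omega)).trans
        (hno ⟨i.val + m, by omega⟩ (Fin.le_def.2 (by simp)) (Fin.lt_def.2 (by simp; omega)) h)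
  have hlt : i.val < j.val := hij
  have hj : (⟨i.val + (j.val - i.val), by omega⟩ : Fin n) = j := Fin.ext (by simp; omega)
  have := key (j.val - i.val) (by omega) (by omega)
  rw [hj] at this
  exact hg this

lemma three_le_numSwitches {n : ℕ} (g : Fin n → Prop) {i₁ i₂ i₃ i₄ : Fin n}
    (h12 : i₁ < i₂) (h23 : i₂ < i₃) (h34 : i₃ < i₄)
    (g1 : g i₁) (g2 : ¬ g i₂) (g3 : g i₃) (g4 : ¬ g i₄) : 3 ≤ numSwitches g := by
  obtain ⟨s, _, hs, hs'⟩ := exists_switch g i₁ i₂ h12 (by tauto)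
  obtain ⟨t, ht0, ht, ht'⟩ := exists_switch g i₂ i₃ h23 (by tauto)
  obtain ⟨u, hu0, _, hu'⟩ := exists_switch g i₃ i₄ h34 (by tauto)
  have hst : s < t := hs.trans_le ht0
  have htu : t < u := ht.trans_le hu0
  have hcard : ({s, t, u} : Finset (Fin n)).card = 3 :=
    Finset.card_eq_three.2 ⟨s, t, u, hst.ne, (hst.trans htu).ne, htu.ne, rfl⟩
  rw [← hcard]
  refine Finset.card_le_card fun x hx => ?_
  simp only [Finset.mem_insert, Finset.mem_singleton] at hx
  rw [Finset.mem_filter]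
  rcases hx with rfl | rfl | rfl
  exacts [⟨Finset.mem_univ _, hs'⟩, ⟨Finset.mem_univ _, ht'⟩, ⟨Finset.mem_univ _, hu'⟩]

lemma exists_best {C : Type*} [Finite C] (r : C → C → Prop) (hr : IsStrictTotalOrder C r)
    (S : Set C) (hS : S.Nonempty) : ∃ m ∈ S, ∀ c ∈ S, c ≠ m → r m c := by
  obtain ⟨m, hm, hmin⟩ := (Finite.wellFounded_of_trans_of_irrefl r).has_min S hS
  refine ⟨m, hm, fun c hc hne => ?_⟩
  rcases trichotomous_of r m c with h | h | h
  · exact h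
  · exact absurd h.symm hne
  · exact absurd h (hmin c hc)

/-- For a profile two-crossing w.r.t. the identity permutation, a consistent
misrepresentation function `ρ` and a positive `k ≤ |C|`, there is a legal `k`-assignment
minimizing the total dissatisfaction among all `k`-assignments. -/
theorem exists_legal_optimal_kAssignment {n : ℕ} {C : Type*} [Fintype C]
    (P : Fin n → C → C → Prop) (hP : ∀ v, IsStrictTotalOrder C (P v))
    (h2c : kCrossingWrt 2 P (Equiv.refl (Fin n)))
    (ρ : Fin n → C → ℚ)
    (hρ : ∀ (v : Fin n) (c c' : C), P v c c' → ρ v c ≤ ρ v c')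
    (k : ℕ) (hk₁ : 1 ≤ k) (hk₂ : k ≤ Fintype.card C) :
    ∃ w : Fin n → C, (Finset.univ.image w).card ≤ k ∧ Legal w ∧
      ∀ w' : Fin n → C, (Finset.univ.image w').card ≤ k →
        (∑ v, ρ v (w v)) ≤ ∑ v, ρ v (w' v) := by
  have : Nonempty C := Fintype.card_pos_iff.1 (by omega)
  obtain ⟨w₀, hw₀, hopt⟩ := Set.exists_min_image
    {w : Fin n → C | (Finset.univ.image w).card ≤ k} (fun w => ∑ v, ρ v (w v))
    (Set.toFinite _)
    ⟨fun _ => Classical.arbitrary C, by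
      refine le_trans (Finset.card_le_card (t := {Classical.arbitrary C}) fun x hx => ?_) hk₁
      obtain ⟨_, _, rfl⟩ := Finset.mem_image.1 hx
      exact Finset.mem_singleton_self _⟩
  choose w hw hbest using fun v =>
    exists_best (P v) (hP v) (Set.range w₀) ⟨w₀ v, Set.mem_range_self v⟩
  refine ⟨w, le_trans (Finset.card_le_card fun x hx => ?_) hw₀, ?_, fun w' hw' => ?_⟩
  · obtain ⟨v, _, rfl⟩ := Finset.mem_image.1 hx
    obtain ⟨u, hu⟩ := hw v
    exact Finset.mem_image.2 ⟨u, Finset.mem_univ _, hu⟩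
  · rintro ⟨a, b, i₁, i₂, i₃, i₄, hab, h12, h23, h34, e1, e2, e3, e4⟩
    have ha : a ∈ Set.range w₀ := e1 ▸ hw i₁
    have hb : b ∈ Set.range w₀ := e2 ▸ hw i₂
    have pa : ∀ v, w v = a → P v a b := fun v h => by
      have := hbest v b hb (by rw [h]; exact hab.symm)
      rwa [h] at this
    have pb : ∀ v, w v = b → ¬ P v a b := fun v h hlt => by
      have := hbest v a ha (by rw [h]; exact hab)
      rw [h] at this
      have := hP v
      exact asymm_of (P v) hlt ‹P v b a›
    have h3 := three_le_numSwitches (fun i => P i a b) h12 h23 h34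
      (pa _ e1) (pb _ e2) (pa _ e3) (pb _ e4)
    have h2 : numSwitches (fun i => P i a b) ≤ 2 := h2c a b hab
    omega
  · refine le_trans (Finset.sum_le_sum fun v _ => ?_) (hopt w' hw')
    by_cases h : w₀ v = w v
    · rw [h]
    · exact hρ v _ _ (hbest v _ (Set.mem_range_self v) h)
end
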